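/- For every n ≥ 7, the matrices A_n and B_n are alternating sign matrices, and the pair (Q(A_n), Q(B_n)) is a self-dual imprecise copula: it is an imprecise copula with Q(A_n)_M = Q(B_n) and Q(B_n)_O = Q(A_n). -/

import Mathlib

open Finset

/-- An `n×n` matrix encoded as `ℕ → ℕ → ℝ` with indices `1,…,n` and zero entries outside. -/
def IsASM (n : ℕ) (a : ℕ → ℕ → ℝ) : Prop :=
  (∀ i j, ¬(1 ≤ i ∧ i ≤ n ∧ 1 ≤ j ∧ j ≤ n) → a i j = 0) ∧
  (∀ i j, a i j = -1 ∨ a i j = 0 ∨ a i j = 1) ∧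
  (∀ i, 1 ≤ i → i ≤ n → ∑ j ∈ Icc 1 n, a i j = 1) ∧
  (∀ j, 1 ≤ j → j ≤ n → ∑ i ∈ Icc 1 n, a i j = 1) ∧
  (∀ i t, 1 ≤ i → i ≤ n → t ≤ n →
    (∑ j ∈ Icc 1 t, a i j = 0 ∨ ∑ j ∈ Icc 1 t, a i j = 1)) ∧
  (∀ j t, 1 ≤ j → j ≤ n → t ≤ n →
    (∑ i ∈ Icc 1 t, a i j = 0 ∨ ∑ i ∈ Icc 1 t, a i j = 1))

/-- No zero entry lies between two nonzero entries in any row or column. -/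
def IsDense (a : ℕ → ℕ → ℝ) : Prop :=
  (∀ i j₁ j₂ j₃, j₁ < j₂ → j₂ < j₃ → a i j₁ ≠ 0 → a i j₃ ≠ 0 → a i j₂ ≠ 0) ∧
  (∀ j i₁ i₂ i₃, i₁ < i₂ → i₂ < i₃ → a i₁ j ≠ 0 → a i₃ j ≠ 0 → a i₂ j ≠ 0)

/-- A proper ASM contains at least one entry `-1`. -/
def IsProper (a : ℕ → ℕ → ℝ) : Prop := ∃ i j, a i j = -1

/-- The matrix `F_n^k`. -/
noncomputable def Fmat (n k : ℕ) : ℕ → ℕ → ℝ := fun i j =>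
  if k + 1 ≤ i + j ∧ (i : ℤ) + j ≤ 2 * n - k + 1 ∧ |(i : ℤ) - j| ≤ (k : ℤ) - 1
  then (-1 : ℝ) ^ (i + j - k - 1) else 0

/-- The discrete quasi-copula associated with a matrix: `Q(A)(r,s) = Σ_{i≤r} Σ_{j≤s} a_{ij}`. -/
noncomputable def Qmat (a : ℕ → ℕ → ℝ) : ℕ → ℕ → ℝ := fun r s =>
  ∑ i ∈ Icc 1 r, ∑ j ∈ Icc 1 s, a i j

/-- Volume of the rectangle `[i,j]×[k,l]` with respect to `Q`. -/
def vol (Q : ℕ → ℕ → ℝ) (i j k l : ℕ) : ℝ := Q i k + Q j l - Q i l - Q j k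

/-- `D_↘^Q(r,s) = min{0, V_Q([r,r']×[s,s']) : r < r' ≤ n, s < s' ≤ n}`. -/
noncomputable def Dse (n : ℕ) (Q : ℕ → ℕ → ℝ) (r s : ℕ) : ℝ :=
  (Icc (r+1) n ×ˢ Icc (s+1) n).fold min 0 (fun p => vol Q r p.1 s p.2)

/-- `D_↙^Q(r,s) = min{0, V_Q([r,r']×[s',s]) : r < r' ≤ n, 0 ≤ s' < s}`. -/
noncomputable def Dsw (n : ℕ) (Q : ℕ → ℕ → ℝ) (r s : ℕ) : ℝ :=
  (Icc (r+1) n ×ˢ range s).fold min 0 (fun p => vol Q r p.1 p.2 s)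

/-- `D_↖^Q(r,s) = min{0, V_Q([r',r]×[s',s]) : 0 ≤ r' < r, 0 ≤ s' < s}`. -/
noncomputable def Dnw (n : ℕ) (Q : ℕ → ℕ → ℝ) (r s : ℕ) : ℝ :=
  (range r ×ˢ range s).fold min 0 (fun p => vol Q p.1 r p.2 s)

/-- `D_↗^Q(r,s) = min{0, V_Q([r',r]×[s,s']) : 0 ≤ r' < r, s < s' ≤ n}`. -/
noncomputable def Dne (n : ℕ) (Q : ℕ → ℕ → ℝ) (r s : ℕ) : ℝ :=
  (range r ×ˢ Icc (s+1) n).fold min 0 (fun p => vol Q p.1 r s p.2)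

/-- The main defect `D_M^Q`. -/
noncomputable def DM (n : ℕ) (Q : ℕ → ℕ → ℝ) (r s : ℕ) : ℝ :=
  min (Dse n Q r s) (Dnw n Q r s)

/-- The opposite defect `D_O^Q`. -/
noncomputable def DO (n : ℕ) (Q : ℕ → ℕ → ℝ) (r s : ℕ) : ℝ :=
  min (Dsw n Q r s) (Dne n Q r s)

/-- Boundary conditions for a function on `L_n × L_n`. -/
def DiscBoundary (n : ℕ) (P : ℕ → ℕ → ℝ) : Prop :=
  ∀ i, i ≤ n → P i 0 = 0 ∧ P 0 i = 0 ∧ P i n = i ∧ P n i = i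

/-- `(P,Q)` is a discrete imprecise copula on `L_n × L_n`. -/
def DiscImpreciseCopula (n : ℕ) (P Q : ℕ → ℕ → ℝ) : Prop :=
  DiscBoundary n P ∧ DiscBoundary n Q ∧
  ∀ i j k l, i ≤ j → j ≤ n → k ≤ l → l ≤ n →
    0 ≤ Q i k + P j l - P i l - P j k ∧
    0 ≤ P i k + Q j l - P i l - P j k ∧
    0 ≤ Q i k + Q j l - Q i l - P j k ∧
    0 ≤ Q i k + Q j l - P i l - Q j k

/-- `(P,Q)` is a self-dual discrete imprecise copula: `P_M = Q` and `Q_O = P` on `L_n × L_n`. -/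
def SelfDual (n : ℕ) (P Q : ℕ → ℕ → ℝ) : Prop :=
  DiscImpreciseCopula n P Q ∧
  (∀ r, r ≤ n → ∀ s, s ≤ n → P r s - DM n P r s = Q r s) ∧
  (∀ r, r ≤ n → ∀ s, s ≤ n → Q r s + DO n Q r s = P r s)

/-- A discrete quasi-copula (integer-range normalization) on `L_n × L_n`. -/
def DiscQuasiCopula (n : ℕ) (Q : ℕ → ℕ → ℝ) : Prop :=
  DiscBoundary n Q ∧
  (∀ i i' j, i ≤ i' → i' ≤ n → j ≤ n → Q i j ≤ Q i' j) ∧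
  (∀ i j j', j ≤ j' → j' ≤ n → i ≤ n → Q i j ≤ Q i j') ∧
  (∀ i i' j j', i ≤ n → i' ≤ n → j ≤ n → j' ≤ n →
    |Q i j - Q i' j'| ≤ |(i : ℝ) - i'| + |(j : ℝ) - j'|)

/-- A discrete copula: a discrete quasi-copula with all rectangle volumes nonnegative. -/
def DiscCopula (n : ℕ) (Q : ℕ → ℕ → ℝ) : Prop :=
  DiscQuasiCopula n Q ∧
  ∀ i j k l, i ≤ j → j ≤ n → k ≤ l → l ≤ n → 0 ≤ vol Q i j k l

/-- A permutation matrix encoded as `ℕ → ℕ → ℝ` with indices `1,…,n`. -/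
def IsPermMatrix (n : ℕ) (p : ℕ → ℕ → ℝ) : Prop :=
  (∀ i j, ¬(1 ≤ i ∧ i ≤ n ∧ 1 ≤ j ∧ j ≤ n) → p i j = 0) ∧
  (∀ i j, p i j = 0 ∨ p i j = 1) ∧
  (∀ i, 1 ≤ i → i ≤ n → ∑ j ∈ Icc 1 n, p i j = 1) ∧
  (∀ j, 1 ≤ j → j ≤ n → ∑ i ∈ Icc 1 n, p i j = 1)

/-- The matrix `A_n` of Section 5 (non-dense construction), `n ≥ 7`. -/
noncomputable def Amat (n : ℕ) : ℕ → ℕ → ℝ := fun r c =>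
  if r + c = n ∧ 1 ≤ c ∧ c ≤ n - 1 then 1
  else if r + c = n + 2 ∧ 3 ≤ c ∧ c ≤ n - 1 then -1
  else if r + c = n + 3 ∧ 3 ≤ c ∧ c ≤ n then 1
  else 0

/-- The matrix `B_n` of Section 5 (non-dense construction), `n ≥ 7`. -/
noncomputable def Bmat (n : ℕ) : ℕ → ℕ → ℝ := fun r c =>
  if r + c = n - 1 ∧ 1 ≤ c ∧ c ≤ n - 2 then 1
  else if r + c = n + 1 ∧ 3 ≤ c ∧ c ≤ n - 2 then -1
  else if r + c = n + 2 ∧ 3 ≤ c ∧ c ≤ n - 1 then 1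
  else if r + c = n + 4 ∧ 5 ≤ c ∧ c ≤ n - 1 then -1
  else if r + c = n + 5 ∧ 5 ≤ c ∧ c ≤ n then 1
  else 0

/-!
Both quasi-copulas have the form `min {r, s, f (r + s - n)}` for a piecewise linear profile `f`:
the diagonals of `A_n` and `B_n` are the second difference of `f`, broken off where one of the
caps `r`, `s` takes over. The imprecise copula inequalities thereby reduce to inequalities between
the two profiles, and they bound the defects from below by `Q(A_n) - Q(B_n)`. This difference is
`0` or `-1`, and it is `-1` only on the four antidiagonals `r + s - n ∈ {-1, 0, 2, 3}`. There, a
rectangle with sides at most `2` has volume `-1`, so the bounds are attained. By symmetry one may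
take `r ≤ s`; then `s` is large, since `n ≥ 7`, and the caps do not interfere with the rectangle.
-/

section Defects

variable {n r s r' s' : ℕ} {c : ℝ} {P Q P' Q' : ℕ → ℕ → ℝ}

theorem vol_comm_of_symm (hQ : ∀ i j, Q i j = Q j i) (i j k l : ℕ) :
    vol Q i j k l = vol Q k l i j := by
  unfold vol
  rw [hQ i k, hQ j l, hQ i l, hQ j k]
  ring

theorem le_DM_iff :
    c ≤ DM n Q r s ↔ c ≤ 0 ∧
      (∀ r' s', r < r' → r' ≤ n → s < s' → s' ≤ n → c ≤ vol Q r r' s s') ∧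
      (∀ r' s', r' < r → s' < s → c ≤ vol Q r' r s' s) := by
  simp only [DM, Dse, Dnw, le_min_iff, le_fold_min, Prod.forall, mem_product, mem_Icc, mem_range,
    Nat.succ_le_iff, and_imp]
  tauto

theorem le_DO_iff :
    c ≤ DO n Q r s ↔ c ≤ 0 ∧
      (∀ r' s', r < r' → r' ≤ n → s' < s → c ≤ vol Q r r' s' s) ∧
      (∀ r' s', r' < r → s < s' → s' ≤ n → c ≤ vol Q r' r s s') := by
  simp only [DO, Dsw, Dne, le_min_iff, le_fold_min, Prod.forall, mem_product, mem_Icc, mem_range,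
    Nat.succ_le_iff, and_imp]
  tauto

theorem DM_nonpos : DM n Q r s ≤ 0 := (le_DM_iff.1 le_rfl).1

theorem DO_nonpos : DO n Q r s ≤ 0 := (le_DO_iff.1 le_rfl).1

theorem DM_le_vol_se (hr : r < r') (hr' : r' ≤ n) (hs : s < s') (hs' : s' ≤ n) :
    DM n Q r s ≤ vol Q r r' s s' :=
  (le_DM_iff.1 le_rfl).2.1 r' s' hr hr' hs hs'

theorem DM_le_vol_nw (hr : r' < r) (hs : s' < s) : DM n Q r s ≤ vol Q r' r s' s :=
  (le_DM_iff.1 le_rfl).2.2 r' s' hr hs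

theorem DO_le_vol_sw (hr : r < r') (hr' : r' ≤ n) (hs : s' < s) :
    DO n Q r s ≤ vol Q r r' s' s :=
  (le_DO_iff.1 le_rfl).2.1 r' s' hr hr' hs

theorem DM_comm_of_symm (hQ : ∀ i j, Q i j = Q j i) (r s : ℕ) :
    DM n Q r s = DM n Q s r := by
  refine eq_of_forall_le_iff fun c ↦ ?_
  simp only [le_DM_iff, vol_comm_of_symm hQ r, vol_comm_of_symm hQ _ r]
  grind

theorem DO_comm_of_symm (hQ : ∀ i j, Q i j = Q j i) (r s : ℕ) :
    DO n Q r s = DO n Q s r := by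
  refine eq_of_forall_le_iff fun c ↦ ?_
  simp only [le_DO_iff, vol_comm_of_symm hQ r, vol_comm_of_symm hQ _ r]
  grind

theorem vol_congr {i j k l : ℕ} (h : ∀ r ≤ n, ∀ s ≤ n, Q r s = Q' r s)
    (hi : i ≤ n) (hj : j ≤ n) (hk : k ≤ n) (hl : l ≤ n) : vol Q i j k l = vol Q' i j k l := by
  simp only [vol, h i hi, h j hj, hk, hl]

theorem DM_congr (h : ∀ r ≤ n, ∀ s ≤ n, Q r s = Q' r s) (hr : r ≤ n) (hs : s ≤ n) :
    DM n Q r s = DM n Q' r s := by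
  refine eq_of_forall_le_iff fun c ↦ ?_
  rw [le_DM_iff, le_DM_iff]
  refine and_congr_right' (and_congr ?_ ?_) <;> refine forall₂_congr fun r' s' ↦ ?_
  · refine forall₄_congr fun _ hr' _ hs' ↦ ?_
    rw [vol_congr h hr hr' hs hs']
  · refine forall₂_congr fun hr' hs' ↦ ?_
    rw [vol_congr h (hr'.le.trans hr) hr (hs'.le.trans hs) hs]

theorem DO_congr (h : ∀ r ≤ n, ∀ s ≤ n, Q r s = Q' r s) (hr : r ≤ n) (hs : s ≤ n) :
    DO n Q r s = DO n Q' r s := by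
  refine eq_of_forall_le_iff fun c ↦ ?_
  rw [le_DO_iff, le_DO_iff]
  refine and_congr_right' (and_congr ?_ ?_) <;> refine forall₂_congr fun r' s' ↦ ?_
  · refine forall₃_congr fun _ hr' hs' ↦ ?_
    rw [vol_congr h hr hr' (hs'.le.trans hs) hs]
  · refine forall₃_congr fun hr' _ hs' ↦ ?_
    rw [vol_congr h (hr'.le.trans hr) hr hs hs']

theorem DiscBoundary.congr (hP : DiscBoundary n P) (h : ∀ r ≤ n, ∀ s ≤ n, P' r s = P r s) :
    DiscBoundary n P' := by
  intro i hi
  rw [h i hi 0 n.zero_le, h 0 n.zero_le i hi, h i hi n le_rfl, h n le_rfl i hi]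
  exact hP i hi

theorem DiscImpreciseCopula.congr (h : DiscImpreciseCopula n P Q)
    (hP : ∀ r ≤ n, ∀ s ≤ n, P' r s = P r s) (hQ : ∀ r ≤ n, ∀ s ≤ n, Q' r s = Q r s) :
    DiscImpreciseCopula n P' Q' := by
  refine ⟨h.1.congr hP, h.2.1.congr hQ, fun i j k l hij hj hkl hl ↦ ?_⟩
  have hi := hij.trans hj
  have hk := hkl.trans hl
  simp only [hP i hi, hP j hj, hQ i hi, hQ j hj, hk, hl]
  exact h.2.2 i j k l hij hj hkl hl

theorem SelfDual.congr (h : SelfDual n P Q) (hP : ∀ r ≤ n, ∀ s ≤ n, P' r s = P r s)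
    (hQ : ∀ r ≤ n, ∀ s ≤ n, Q' r s = Q r s) : SelfDual n P' Q' := by
  refine ⟨h.1.congr hP hQ, fun r hr s hs ↦ ?_, fun r hr s hs ↦ ?_⟩
  · rw [DM_congr hP hr hs, hP r hr s hs, hQ r hr s hs, h.2.1 r hr s hs]
  · rw [DO_congr hQ hr hs, hP r hr s hs, hQ r hr s hs, h.2.2 r hr s hs]

namespace DiscImpreciseCopula

theorem apply_le_apply (h : DiscImpreciseCopula n P Q) (hr : r ≤ n) (hs : s ≤ n) :
    P r s ≤ Q r s := by
  have := (h.2.2 r r s s le_rfl hr le_rfl hs).1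
  linarith

theorem sub_le_DM (h : DiscImpreciseCopula n P Q) (hr : r ≤ n) (hs : s ≤ n) :
    P r s - Q r s ≤ DM n P r s := by
  refine le_DM_iff.2 ⟨sub_nonpos.2 (h.apply_le_apply hr hs), fun r' s' hr' hr'n hs' hs'n ↦ ?_,
    fun r' s' hr' hs' ↦ ?_⟩ <;> unfold vol
  · linarith [(h.2.2 r r' s s' hr'.le hr'n hs'.le hs'n).1]
  · linarith [(h.2.2 r' r s' s hr'.le hr hs'.le hs).2.1]

theorem sub_le_DO (h : DiscImpreciseCopula n P Q) (hr : r ≤ n) (hs : s ≤ n) :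
    P r s - Q r s ≤ DO n Q r s := by
  refine le_DO_iff.2 ⟨sub_nonpos.2 (h.apply_le_apply hr hs), fun r' s' hr' hr'n hs' ↦ ?_,
    fun r' s' hr' hs' hs'n ↦ ?_⟩ <;> unfold vol
  · linarith [(h.2.2 r r' s' s hr'.le hr'n hs'.le hs).2.2.2]
  · linarith [(h.2.2 r' r s s' hr'.le hr hs'.le hs'n).2.2.1]

theorem selfDual (h : DiscImpreciseCopula n P Q)
    (hM : ∀ r ≤ n, ∀ s ≤ n, DM n P r s ≤ P r s - Q r s)
    (hO : ∀ r ≤ n, ∀ s ≤ n, DO n Q r s ≤ P r s - Q r s) : SelfDual n P Q := by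
  refine ⟨h, fun r hr s hs ↦ ?_, fun r hr s hs ↦ ?_⟩
  · linarith [h.sub_le_DM hr hs, hM r hr s hs]
  · linarith [h.sub_le_DO hr hs, hO r hr s hs]

end DiscImpreciseCopula

end Defects

section CornerSums

variable {n : ℕ} {a F : ℕ → ℕ → ℝ}

theorem sum_row_eq_sub (hF : DiscBoundary n F)
    (ha : ∀ r < n, ∀ s < n, a (r + 1) (s + 1) = vol F r (r + 1) s (s + 1))
    {r t : ℕ} (hr : r < n) (ht : t ≤ n) :
    ∑ j ∈ Icc 1 t, a (r + 1) j = F (r + 1) t - F r t := by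
  induction t with
  | zero => simp [(hF r hr.le).1, (hF (r + 1) hr).1]
  | succ t ih =>
    rw [sum_Icc_succ_top (by omega), ih (by omega), ha r hr t ht, vol]
    ring

theorem DiscBoundary.swap (hF : DiscBoundary n F) : DiscBoundary n (Function.swap F) := by
  intro i hi
  obtain ⟨h₁, h₂, h₃, h₄⟩ := hF i hi
  exact ⟨h₂, h₁, h₄, h₃⟩

theorem vol_swap (F : ℕ → ℕ → ℝ) (i j k l : ℕ) :
    vol (Function.swap F) i j k l = vol F k l i j := by
  simp only [vol, Function.swap]
  ring

theorem sum_col_eq_sub (hF : DiscBoundary n F)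
    (ha : ∀ r < n, ∀ s < n, a (r + 1) (s + 1) = vol F r (r + 1) s (s + 1))
    {s t : ℕ} (hs : s < n) (ht : t ≤ n) :
    ∑ i ∈ Icc 1 t, a i (s + 1) = F t (s + 1) - F t s :=
  sum_row_eq_sub (a := Function.swap a) hF.swap
    (fun r hr s hs ↦ (ha s hs r hr).trans (vol_swap F r (r + 1) s (s + 1)).symm) hs ht

theorem Qmat_eq_of_eq_vol (hF : DiscBoundary n F)
    (ha : ∀ r < n, ∀ s < n, a (r + 1) (s + 1) = vol F r (r + 1) s (s + 1))
    {r s : ℕ} (hr : r ≤ n) (hs : s ≤ n) : Qmat a r s = F r s := by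
  induction r with
  | zero => simp [Qmat, (hF s hs).2.1]
  | succ r ih =>
    rw [Qmat, sum_Icc_succ_top (by omega), ← Qmat, ih (by omega), sum_row_eq_sub hF ha hr hs]
    ring

theorem isASM_of_eq_vol (hF : DiscBoundary n F)
    (hrow : ∀ r < n, ∀ s ≤ n, F (r + 1) s - F r s = 0 ∨ F (r + 1) s - F r s = 1)
    (hcol : ∀ r ≤ n, ∀ s < n, F r (s + 1) - F r s = 0 ∨ F r (s + 1) - F r s = 1)
    (ha₀ : ∀ i j, ¬(1 ≤ i ∧ i ≤ n ∧ 1 ≤ j ∧ j ≤ n) → a i j = 0)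
    (ha : ∀ r < n, ∀ s < n, a (r + 1) (s + 1) = vol F r (r + 1) s (s + 1)) :
    IsASM n a := by
  refine ⟨ha₀, fun i j ↦ ?_, fun i hi hin ↦ ?_, fun j hj hjn ↦ ?_, fun i t hi hin ht ↦ ?_,
    fun j t hj hjn ht ↦ ?_⟩
  · by_cases h : 1 ≤ i ∧ i ≤ n ∧ 1 ≤ j ∧ j ≤ n
    · obtain ⟨hi, hin, hj, hjn⟩ := h
      obtain ⟨r, rfl⟩ := Nat.exists_eq_add_of_le' hi
      obtain ⟨s, rfl⟩ := Nat.exists_eq_add_of_le' hj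
      rw [ha r hin s hjn, vol]
      grind
    · exact Or.inr (Or.inl (ha₀ i j h))
  · obtain ⟨r, rfl⟩ := Nat.exists_eq_add_of_le' hi
    rw [sum_row_eq_sub hF ha hin le_rfl, (hF (r + 1) hin).2.2.1, (hF r (by omega)).2.2.1]
    simp
  · obtain ⟨s, rfl⟩ := Nat.exists_eq_add_of_le' hj
    rw [sum_col_eq_sub hF ha hjn le_rfl, (hF (s + 1) hjn).2.2.2, (hF s (by omega)).2.2.2]
    simp
  · obtain ⟨r, rfl⟩ := Nat.exists_eq_add_of_le' hi
    rw [sum_row_eq_sub hF ha hin ht]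
    exact hrow r hin t ht
  · obtain ⟨s, rfl⟩ := Nat.exists_eq_add_of_le' hj
    rw [sum_col_eq_sub hF ha hjn ht]
    exact hcol t ht s hjn

end CornerSums

/-- A function of one integer variable is a profile if it is nonnegative, lies above the diagonal,
is monotone and 1-Lipschitz. These are the conditions making `min {r, s, f (r + s - n)}` a
quasi-copula. -/
structure IsProfile (f : ℤ → ℤ) : Prop where
  nonneg : ∀ t, 0 ≤ f t
  self_le : ∀ t, t ≤ f t
  mono : Monotone f
  le_add_sub : ∀ ⦃t u⦄, t ≤ u → f u ≤ f t + (u - t)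

/-- The quasi-copula `min {r, s, f (r + s - n)}` with profile `f`, as an integer. -/
def cappedProfile (n : ℕ) (f : ℤ → ℤ) (r s : ℕ) : ℤ := min (min (r : ℤ) s) (f ((r : ℤ) + s - n))

/-- The quasi-copula `min {r, s, f (r + s - n)}` with profile `f`, as a real-valued function. -/
def profileCopula (n : ℕ) (f : ℤ → ℤ) (r s : ℕ) : ℝ := cappedProfile n f r s

section Profiles

variable {f : ℤ → ℤ} {n i j k l r s : ℕ}

theorem cappedProfile_comm (r s : ℕ) : cappedProfile n f r s = cappedProfile n f s r := by
  rw [cappedProfile, cappedProfile, min_comm (r : ℤ), add_comm (r : ℤ)]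

theorem profileCopula_comm (r s : ℕ) : profileCopula n f r s = profileCopula n f s r :=
  congrArg _ (cappedProfile_comm r s)

theorem vol_profileCopula (i j k l : ℕ) :
    vol (profileCopula n f) i j k l = ((cappedProfile n f i k + cappedProfile n f j l -
      cappedProfile n f i l - cappedProfile n f j k : ℤ) : ℝ) := by
  simp [vol, profileCopula]

theorem cappedProfile_le_left (r s : ℕ) : cappedProfile n f r s ≤ r :=
  (min_le_left _ _).trans (min_le_left _ _)

theorem cappedProfile_le_right (r s : ℕ) : cappedProfile n f r s ≤ s :=
  (min_le_left _ _).trans (min_le_right _ _)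

theorem cappedProfile_le_profile (r s : ℕ) : cappedProfile n f r s ≤ f ((r : ℤ) + s - n) :=
  min_le_right _ _

theorem cappedProfile_eq_or (r s : ℕ) :
    cappedProfile n f r s = r ∨ cappedProfile n f r s = s ∨
      cappedProfile n f r s = f ((r : ℤ) + s - n) := by
  unfold cappedProfile
  omega

theorem cappedProfile_le_cappedProfile {g : ℤ → ℤ} (h : f ≤ g) (r s : ℕ) :
    cappedProfile n f r s ≤ cappedProfile n g r s :=
  min_le_min_left _ (h _)

namespace IsProfile

theorem cappedProfile_mono_left (hf : IsProfile f) (hij : i ≤ j) :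
    cappedProfile n f i s ≤ cappedProfile n f j s := by
  have := hf.mono (show (i : ℤ) + s - n ≤ j + s - n by omega)
  unfold cappedProfile
  omega

theorem cappedProfile_le_add_left (hf : IsProfile f) (hij : i ≤ j) :
    cappedProfile n f j s ≤ cappedProfile n f i s + (j - i) := by
  have := hf.le_add_sub (show (i : ℤ) + s - n ≤ j + s - n by omega)
  unfold cappedProfile
  omega

theorem cappedProfile_mono_right (hf : IsProfile f) (hkl : k ≤ l) :
    cappedProfile n f r k ≤ cappedProfile n f r l := by
  rw [cappedProfile_comm r k, cappedProfile_comm r l]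
  exact hf.cappedProfile_mono_left hkl

theorem cappedProfile_le_add_right (hf : IsProfile f) (hkl : k ≤ l) :
    cappedProfile n f r l ≤ cappedProfile n f r k + (l - k) := by
  rw [cappedProfile_comm r k, cappedProfile_comm r l]
  exact hf.cappedProfile_le_add_left hkl

theorem discBoundary_profileCopula (hf : IsProfile f) : DiscBoundary n (profileCopula n f) := by
  have zero_right (i : ℕ) : cappedProfile n f i 0 = 0 := by
    have := hf.nonneg ((i : ℤ) + (0 : ℕ) - n)
    unfold cappedProfile
    omega
  have top_right {i : ℕ} (hi : i ≤ n) : cappedProfile n f i n = i := by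
    have := hf.self_le ((i : ℤ) + n - n)
    unfold cappedProfile
    omega
  intro i hi
  rw [profileCopula_comm 0 i, profileCopula_comm n i]
  simp [profileCopula, zero_right, top_right hi]

theorem profileCopula_succ_left_sub (hf : IsProfile f) (r s : ℕ) :
    profileCopula n f (r + 1) s - profileCopula n f r s = 0 ∨
      profileCopula n f (r + 1) s - profileCopula n f r s = 1 := by
  have hmono := hf.cappedProfile_mono_left (n := n) (s := s) (Nat.le_add_right r 1)
  have hlip := hf.cappedProfile_le_add_left (n := n) (s := s) (Nat.le_add_right r 1)
  unfold profileCopula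
  norm_cast
  omega

theorem profileCopula_succ_right_sub (hf : IsProfile f) (r s : ℕ) :
    profileCopula n f r (s + 1) - profileCopula n f r s = 0 ∨
      profileCopula n f r (s + 1) - profileCopula n f r s = 1 := by
  rw [profileCopula_comm r (s + 1), profileCopula_comm r s]
  exact hf.profileCopula_succ_left_sub s r

theorem isASM {a : ℕ → ℕ → ℝ} (hf : IsProfile f)
    (ha₀ : ∀ i j, ¬(1 ≤ i ∧ i ≤ n ∧ 1 ≤ j ∧ j ≤ n) → a i j = 0)
    (ha : ∀ r < n, ∀ s < n,
      a (r + 1) (s + 1) = vol (profileCopula n f) r (r + 1) s (s + 1)) : IsASM n a :=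
  isASM_of_eq_vol hf.discBoundary_profileCopula
    (fun r _ s _ ↦ hf.profileCopula_succ_left_sub r s)
    (fun r _ s _ ↦ hf.profileCopula_succ_right_sub r s) ha₀ ha

-- Where `min {r, s}` is the active cap, the four corner values cancel off the diagonal.
theorem vol_profileCopula_succ (hf : IsProfile f)
    (hdiag : r = s → f ((r : ℤ) + s - n + 1) ≤ r) :
    vol (profileCopula n f) r (r + 1) s (s + 1) =
      ((if f ((r : ℤ) + s - n + 1) ≤ min (r : ℤ) s then
        f ((r : ℤ) + s - n + 2) - 2 * f ((r : ℤ) + s - n + 1) + f ((r : ℤ) + s - n)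
      else 0 : ℤ) : ℝ) := by
  rw [vol_profileCopula]
  have e₁ : ((r + 1 : ℕ) : ℤ) + (s + 1 : ℕ) - n = (r : ℤ) + s - n + 2 := by omega
  have e₂ : (r : ℤ) + (s + 1 : ℕ) - n = (r : ℤ) + s - n + 1 := by omega
  have e₃ : ((r + 1 : ℕ) : ℤ) + s - n = (r : ℤ) + s - n + 1 := by omega
  unfold cappedProfile
  rw [e₁, e₂, e₃]
  generalize (r : ℤ) + s - n = t at *
  have m₁ := hf.mono (show t ≤ t + 1 by omega)
  have m₂ := hf.mono (show t + 1 ≤ t + 2 by omega)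
  have l₁ := hf.le_add_sub (show t ≤ t + 1 by omega)
  have l₂ := hf.le_add_sub (show t + 1 ≤ t + 2 by omega)
  norm_cast
  split_ifs <;> omega

end IsProfile

theorem vol_profileCopula_le_neg_one
    (hne : f ((i : ℤ) + l - n) ≤ min (i : ℤ) l) (hsw : f ((j : ℤ) + k - n) ≤ min (j : ℤ) k)
    (h : f ((i : ℤ) + k - n) + f ((j : ℤ) + l - n) < f ((i : ℤ) + l - n) + f ((j : ℤ) + k - n)) :
    vol (profileCopula n f) i j k l ≤ -1 := by
  have hvol : cappedProfile n f i k + cappedProfile n f j l - cappedProfile n f i l -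
      cappedProfile n f j k ≤ -1 := by
    have hnw := cappedProfile_le_profile (n := n) (f := f) i k
    have hse := cappedProfile_le_profile (n := n) (f := f) j l
    rw [cappedProfile.eq_def n f i l, min_eq_right hne, cappedProfile.eq_def n f j k,
      min_eq_right hsw]
    omega
  rw [vol_profileCopula]
  exact_mod_cast hvol

theorem cappedProfile_rectangle_nonneg {a b c d : ℤ → ℤ} (hc : IsProfile c) (hd : IsProfile d)
    (hca : c ≤ a) (hcb : c ≤ b) (hda : d ≤ a) (hdb : d ≤ b)
    (h : ∀ (t : ℤ) (p q : ℕ), c (t + q) + d (t + p) ≤ a t + b (t + p + q))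
    (hij : i ≤ j) (hkl : k ≤ l) :
    0 ≤ cappedProfile n a i k + cappedProfile n b j l - cappedProfile n c i l -
      cappedProfile n d j k := by
  have c_le_left := cappedProfile_le_left (n := n) (f := c) i l
  have d_le_right := cappedProfile_le_right (n := n) (f := d) j k
  rcases cappedProfile_eq_or (n := n) (f := a) i k with ha | ha | ha
  · have d_mono := hd.cappedProfile_mono_right (n := n) (r := j) hkl
    have d_le_b := cappedProfile_le_cappedProfile (n := n) hdb j l
    omega
  · have c_mono := hc.cappedProfile_mono_left (n := n) (s := l) hij
    have c_le_b := cappedProfile_le_cappedProfile (n := n) hcb j l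
    omega
  rcases cappedProfile_eq_or (n := n) (f := b) j l with hb | hb | hb
  · have d_lip := hd.cappedProfile_le_add_left (n := n) (s := k) hij
    have d_le_a := cappedProfile_le_cappedProfile (n := n) hda i k
    omega
  · have c_lip := hc.cappedProfile_le_add_right (n := n) (r := i) hkl
    have c_le_a := cappedProfile_le_cappedProfile (n := n) hca i k
    omega
  · have hprof := h ((i : ℤ) + k - n) (j - i) (l - k)
    rw [show (i : ℤ) + k - n + (j - i : ℕ) + (l - k : ℕ) = j + l - n by omega,
      show (i : ℤ) + k - n + (j - i : ℕ) = j + k - n by omega,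
      show (i : ℤ) + k - n + (l - k : ℕ) = i + l - n by omega] at hprof
    have c_le_prof := cappedProfile_le_profile (n := n) (f := c) i l
    have d_le_prof := cappedProfile_le_profile (n := n) (f := d) j k
    omega

theorem discImpreciseCopula_profileCopula {g : ℤ → ℤ} (hf : IsProfile f) (hg : IsProfile g)
    (hfg : f ≤ g) (h₁ : ∀ (t : ℤ) (p q : ℕ), f (t + q) + f (t + p) ≤ g t + f (t + p + q))
    (h₂ : ∀ (t : ℤ) (p q : ℕ), f (t + q) + f (t + p) ≤ f t + g (t + p + q))
    (h₃ : ∀ (t : ℤ) (p q : ℕ), g (t + q) + f (t + p) ≤ g t + g (t + p + q)) :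
    DiscImpreciseCopula n (profileCopula n f) (profileCopula n g) := by
  have h₄ (t : ℤ) (p q : ℕ) : f (t + q) + g (t + p) ≤ g t + g (t + p + q) := by
    rw [add_comm (f _), add_right_comm]
    exact h₃ t q p
  refine ⟨hf.discBoundary_profileCopula, hg.discBoundary_profileCopula,
    fun i j k l hij _ hkl _ ↦ ?_⟩
  unfold profileCopula
  norm_cast
  exact ⟨cappedProfile_rectangle_nonneg hf hf hfg le_rfl hfg le_rfl h₁ hij hkl,
    cappedProfile_rectangle_nonneg hf hf le_rfl hfg le_rfl hfg h₂ hij hkl,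
    cappedProfile_rectangle_nonneg hg hf le_rfl le_rfl hfg hfg h₃ hij hkl,
    cappedProfile_rectangle_nonneg hf hg hfg hfg le_rfl le_rfl h₄ hij hkl⟩

end Profiles

/-- The profile of `Q(A_n)`: it is constant on `(-∞, -1]` and on `[1, 2]`, and has slope 1
elsewhere. -/
def profileA (t : ℤ) : ℤ := max (max 0 (min (t + 1) 2)) t

/-- The profile of `Q(B_n)`: it is constant on `(-∞, -2]`, on `[0, 1]` and on `[3, 4]`, and has
slope 1 elsewhere. -/
def profileB (t : ℤ) : ℤ := max (max 0 (min (t + 2) 2)) (max (min (t + 1) 4) t)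

section Staircases

variable {n r s : ℕ}

theorem isProfile_profileA : IsProfile profileA := by
  refine ⟨fun t ↦ ?_, fun t ↦ ?_, fun t u _ ↦ ?_, fun t u _ ↦ ?_⟩ <;> unfold profileA <;> omega

theorem isProfile_profileB : IsProfile profileB := by
  refine ⟨fun t ↦ ?_, fun t ↦ ?_, fun t u _ ↦ ?_, fun t u _ ↦ ?_⟩ <;> unfold profileB <;> omega

theorem profileA_le_profileB : profileA ≤ profileB := by
  refine Pi.le_def.2 fun t ↦ ?_
  unfold profileA profileB
  omega

theorem profileB_eq_profileA_or (t : ℤ) :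
    profileB t = profileA t ∨
      profileB t = profileA t + 1 ∧ (t = -1 ∨ t = 0 ∨ t = 2 ∨ t = 3) := by
  unfold profileA profileB
  omega

theorem profileA_add_profileA_le_profileB_add_profileA (t : ℤ) (p q : ℕ) :
    profileA (t + q) + profileA (t + p) ≤ profileB t + profileA (t + p + q) := by
  unfold profileA profileB
  omega

theorem profileA_add_profileA_le_profileA_add_profileB (t : ℤ) (p q : ℕ) :
    profileA (t + q) + profileA (t + p) ≤ profileA t + profileB (t + p + q) := by
  unfold profileA profileB
  omega

theorem profileB_add_profileA_le_profileB_add_profileB (t : ℤ) (p q : ℕ) :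
    profileB (t + q) + profileA (t + p) ≤ profileB t + profileB (t + p + q) := by
  unfold profileA profileB
  omega

theorem discImpreciseCopula_profileA_profileB (n : ℕ) :
    DiscImpreciseCopula n (profileCopula n profileA) (profileCopula n profileB) :=
  discImpreciseCopula_profileCopula isProfile_profileA isProfile_profileB profileA_le_profileB
    profileA_add_profileA_le_profileB_add_profileA profileA_add_profileA_le_profileA_add_profileB
    profileB_add_profileA_le_profileB_add_profileB

theorem profileCopula_profileA_sub_profileB_eq_or (n r s : ℕ) :
    profileCopula n profileA r s - profileCopula n profileB r s = 0 ∨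
      profileCopula n profileA r s - profileCopula n profileB r s = -1 ∧
        profileA ((r : ℤ) + s - n) < min (r : ℤ) s ∧
        ((r : ℤ) + s - n = -1 ∨ (r : ℤ) + s - n = 0 ∨ (r : ℤ) + s - n = 2 ∨
          (r : ℤ) + s - n = 3) := by
  have := profileB_eq_profileA_or ((r : ℤ) + s - n)
  unfold profileCopula cappedProfile
  generalize (r : ℤ) + s - n = t at *
  norm_cast
  omega

theorem DM_profileA_le_of_le (hn : 4 ≤ n) (hrs : r ≤ s) (hs : s ≤ n) :
    DM n (profileCopula n profileA) r s ≤
      profileCopula n profileA r s - profileCopula n profileB r s := by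
  obtain h | ⟨h, hlt, ht⟩ := profileCopula_profileA_sub_profileB_eq_or n r s
  · exact h ▸ DM_nonpos
  rw [h]
  unfold profileA at hlt
  obtain ht | ht | ht | ht := ht
  · calc DM n (profileCopula n profileA) r s
        ≤ vol (profileCopula n profileA) r (r + 2) s (s + 1) :=
          DM_le_vol_se (by omega) (by omega) (by omega) (by omega)
      _ ≤ -1 := vol_profileCopula_le_neg_one (by unfold profileA; omega)
          (by unfold profileA; omega) (by unfold profileA; omega)
  · calc DM n (profileCopula n profileA) r s
        ≤ vol (profileCopula n profileA) r (r + 1) s (s + 1) :=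
          DM_le_vol_se (by omega) (by omega) (by omega) (by omega)
      _ ≤ -1 := vol_profileCopula_le_neg_one (by unfold profileA; omega)
          (by unfold profileA; omega) (by unfold profileA; omega)
  · calc DM n (profileCopula n profileA) r s
        ≤ vol (profileCopula n profileA) (r - 1) r (s - 1) s :=
          DM_le_vol_nw (by omega) (by omega)
      _ ≤ -1 := vol_profileCopula_le_neg_one (by unfold profileA; omega)
          (by unfold profileA; omega) (by unfold profileA; omega)
  · calc DM n (profileCopula n profileA) r s
        ≤ vol (profileCopula n profileA) (r - 2) r (s - 2) s :=
          DM_le_vol_nw (by omega) (by omega)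
      _ ≤ -1 := vol_profileCopula_le_neg_one (by unfold profileA; omega)
          (by unfold profileA; omega) (by unfold profileA; omega)

theorem DO_profileB_le_of_le (hn : 7 ≤ n) (hrs : r ≤ s) (hs : s ≤ n) :
    DO n (profileCopula n profileB) r s ≤
      profileCopula n profileA r s - profileCopula n profileB r s := by
  obtain h | ⟨h, hlt, ht⟩ := profileCopula_profileA_sub_profileB_eq_or n r s
  · exact h ▸ DO_nonpos
  rw [h]
  unfold profileA at hlt
  obtain ht | ht | ht | ht := ht
  · calc DO n (profileCopula n profileB) r s
        ≤ vol (profileCopula n profileB) r (r + 2) (s - 1) s :=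
          DO_le_vol_sw (by omega) (by omega) (by omega)
      _ ≤ -1 := vol_profileCopula_le_neg_one (by unfold profileB; omega)
          (by unfold profileB; omega) (by unfold profileB; omega)
  · calc DO n (profileCopula n profileB) r s
        ≤ vol (profileCopula n profileB) r (r + 1) (s - 1) s :=
          DO_le_vol_sw (by omega) (by omega) (by omega)
      _ ≤ -1 := vol_profileCopula_le_neg_one (by unfold profileB; omega)
          (by unfold profileB; omega) (by unfold profileB; omega)
  · calc DO n (profileCopula n profileB) r s
        ≤ vol (profileCopula n profileB) r (r + 2) (s - 1) s :=
          DO_le_vol_sw (by omega) (by omega) (by omega)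
      _ ≤ -1 := vol_profileCopula_le_neg_one (by unfold profileB; omega)
          (by unfold profileB; omega) (by unfold profileB; omega)
  · calc DO n (profileCopula n profileB) r s
        ≤ vol (profileCopula n profileB) r (r + 1) (s - 1) s :=
          DO_le_vol_sw (by omega) (by omega) (by omega)
      _ ≤ -1 := vol_profileCopula_le_neg_one (by unfold profileB; omega)
          (by unfold profileB; omega) (by unfold profileB; omega)

theorem DM_profileA_le (hn : 4 ≤ n) (hr : r ≤ n) (hs : s ≤ n) :
    DM n (profileCopula n profileA) r s ≤
      profileCopula n profileA r s - profileCopula n profileB r s := by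
  obtain hrs | hsr := le_total r s
  · exact DM_profileA_le_of_le hn hrs hs
  · rw [DM_comm_of_symm profileCopula_comm, profileCopula_comm r, profileCopula_comm r]
    exact DM_profileA_le_of_le hn hsr hr

theorem DO_profileB_le (hn : 7 ≤ n) (hr : r ≤ n) (hs : s ≤ n) :
    DO n (profileCopula n profileB) r s ≤
      profileCopula n profileA r s - profileCopula n profileB r s := by
  obtain hrs | hsr := le_total r s
  · exact DO_profileB_le_of_le hn hrs hs
  · rw [DO_comm_of_symm profileCopula_comm, profileCopula_comm r, profileCopula_comm r]
    exact DO_profileB_le_of_le hn hsr hr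

theorem selfDual_profileA_profileB (hn : 7 ≤ n) :
    SelfDual n (profileCopula n profileA) (profileCopula n profileB) :=
  (discImpreciseCopula_profileA_profileB n).selfDual
    (fun _ hr _ hs ↦ DM_profileA_le (by omega) hr hs) fun _ hr _ hs ↦ DO_profileB_le hn hr hs

theorem second_difference_profileA (t : ℤ) :
    profileA (t + 2) - 2 * profileA (t + 1) + profileA t =
      if t = -2 then 1 else if t = 0 then -1 else if t = 1 then 1 else 0 := by
  unfold profileA
  split_ifs <;> omega

theorem second_difference_profileB (t : ℤ) :
    profileB (t + 2) - 2 * profileB (t + 1) + profileB t =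
      if t = -3 then 1 else if t = -1 then -1 else if t = 0 then 1 else if t = 2 then -1
      else if t = 3 then 1 else 0 := by
  unfold profileB
  split_ifs <;> omega

theorem Amat_succ_succ_eq_vol (hn : 3 ≤ n) (hr : r < n) (hs : s < n) :
    Amat n (r + 1) (s + 1) = vol (profileCopula n profileA) r (r + 1) s (s + 1) := by
  rw [isProfile_profileA.vol_profileCopula_succ (by unfold profileA; omega),
    second_difference_profileA]
  unfold Amat profileA
  split_ifs <;> first | norm_num; done | omega

theorem Bmat_succ_succ_eq_vol (hn : 5 ≤ n) (hr : r < n) (hs : s < n) :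
    Bmat n (r + 1) (s + 1) = vol (profileCopula n profileB) r (r + 1) s (s + 1) := by
  rw [isProfile_profileB.vol_profileCopula_succ (by unfold profileB; omega),
    second_difference_profileB]
  unfold Bmat profileB
  split_ifs <;> first | norm_num; done | omega

theorem isASM_Amat (hn : 3 ≤ n) : IsASM n (Amat n) := by
  refine isProfile_profileA.isASM (fun i j h ↦ ?_)
    fun r hr s hs ↦ Amat_succ_succ_eq_vol hn hr hs
  unfold Amat
  split_ifs <;> first | rfl | omega

theorem isASM_Bmat (hn : 5 ≤ n) : IsASM n (Bmat n) := by
  refine isProfile_profileB.isASM (fun i j h ↦ ?_)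
    fun r hr s hs ↦ Bmat_succ_succ_eq_vol hn hr hs
  unfold Bmat
  split_ifs <;> first | rfl | omega

theorem Qmat_Amat_eq_profileCopula (hn : 3 ≤ n) (hr : r ≤ n) (hs : s ≤ n) :
    Qmat (Amat n) r s = profileCopula n profileA r s :=
  Qmat_eq_of_eq_vol isProfile_profileA.discBoundary_profileCopula
    (fun _ hr _ hs ↦ Amat_succ_succ_eq_vol hn hr hs) hr hs

theorem Qmat_Bmat_eq_profileCopula (hn : 5 ≤ n) (hr : r ≤ n) (hs : s ≤ n) :
    Qmat (Bmat n) r s = profileCopula n profileB r s :=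
  Qmat_eq_of_eq_vol isProfile_profileB.discBoundary_profileCopula
    (fun _ hr _ hs ↦ Bmat_succ_succ_eq_vol hn hr hs) hr hs

end Staircases

/-- For every `n ≥ 7`, `A_n` and `B_n` are alternating sign matrices and
`(Q(A_n), Q(B_n))` is a self-dual imprecise copula. -/
theorem AnBn_selfDual (n : ℕ) (hn : 7 ≤ n) :
    IsASM n (Amat n) ∧ IsASM n (Bmat n) ∧
      SelfDual n (Qmat (Amat n)) (Qmat (Bmat n)) := by
  refine ⟨isASM_Amat (by omega), isASM_Bmat (by omega), ?_⟩
  refine (selfDual_profileA_profileB hn).congr (fun r hr s hs ↦ ?_) fun r hr s hs ↦ ?_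
  · exact Qmat_Amat_eq_profileCopula (by omega) hr hs
  · exact Qmat_Bmat_eq_profileCopula (by omega) hr hs
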